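/- Let ω ≥ 1 be an integer and η > 0. The double series Ξ₅(s) = (2 sin(πs)/π) · Σ_{k≥1} Σ_{j≥0} ((s)_j/(j!·4^j)) · (kω)^{1-2s-2j} · ∫₁^{∞} u^{-2s-2j} · log(1 + √(1 + u² sinh(η)²)/(u·cosh(η))) du converges absolutely and locally uniformly on the strip {s ∈ ℂ : 1 < Re(s) < 2}, and its sum extends to a meromorphic function on the half-plane {Re(s) > -1/2} which is holomorphic at s = 0 with value Ξ₅(0) = 0; moreover, for fixed ω, its derivative at 0 satisfies Ξ₅'(0) = (ζ(0) + log 2)/(2ω) + (ω/6)·log 2 + (ω/6)·log(η) + o(1) as η → 0⁺. -/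

import Mathlib

open MeasureTheory Filter

/-- The Pochhammer symbol `(s)_j = s(s+1)⋯(s+j-1)`. -/
noncomputable def pochSym (s : ℂ) (j : ℕ) : ℂ := ∏ i ∈ Finset.range j, (s + i)

/-- The `(k,j)`-term of the double series `Ξ₅(s)`:
`(2 sin(πs)/π) · ((s)_j/(j!·4^j)) · (kω)^{1-2s-2j} ·
  ∫₁^∞ u^{-2s-2j} · log(1 + √(1 + u² sinh(η)²)/(u·cosh η)) du`. -/
noncomputable def Xi5Term (ω : ℕ) (η : ℝ) (k j : ℕ) (s : ℂ) : ℂ :=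
  (2 * Complex.sin ((Real.pi : ℂ) * s) / (Real.pi : ℂ)) *
    (pochSym s j / ((Nat.factorial j : ℂ) * 4 ^ j)) *
    (((k : ℝ) * (ω : ℝ) : ℝ) : ℂ) ^ (1 - 2 * s - 2 * (j : ℂ)) *
    ∫ u in Set.Ioi (1 : ℝ),
      (u : ℂ) ^ (-(2 * s) - 2 * (j : ℂ)) *
        ((Real.log (1 + Real.sqrt (1 + u ^ 2 * Real.sinh η ^ 2) / (u * Real.cosh η)) : ℝ) : ℂ)

noncomputable def Lg (η u : ℝ) : ℝ :=
  Real.log (1 + Real.sqrt (1 + u ^ 2 * Real.sinh η ^ 2) / (u * Real.cosh η))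

noncomputable def Li (η : ℝ) : ℝ := η - Real.log (Real.cosh η)

lemma Li_eq (η : ℝ) : Li η = Real.log (1 + Real.sinh η / Real.cosh η) := by
  have hC := Real.cosh_pos η
  have : 1 + Real.sinh η / Real.cosh η = Real.exp η / Real.cosh η := by
    rw [← Real.cosh_add_sinh]; field_simp
  rw [this, Real.log_div (Real.exp_pos _).ne' hC.ne', Real.log_exp, Li]

lemma q_sq (η u : ℝ) : Real.sqrt (1 + u ^ 2 * Real.sinh η ^ 2) ^ 2 = 1 + u ^ 2 * Real.sinh η ^ 2 :=
  Real.sq_sqrt (by positivity)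

lemma q_pos (η u : ℝ) : 0 < Real.sqrt (1 + u ^ 2 * Real.sinh η ^ 2) :=
  Real.sqrt_pos.2 (by positivity)

lemma q_ge (η u : ℝ) :
    u * Real.sinh η ≤ Real.sqrt (1 + u ^ 2 * Real.sinh η ^ 2) := by
  apply Real.le_sqrt_of_sq_le; nlinarith

lemma Lg_nonneg {η u : ℝ} (hu : 0 < u) : 0 ≤ Lg η u := by
  have hC := Real.cosh_pos η
  apply Real.log_nonneg
  have : 0 ≤ Real.sqrt (1 + u ^ 2 * Real.sinh η ^ 2) / (u * Real.cosh η) := by positivity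
  linarith

lemma Lg_le {η u : ℝ} (hu : 1 ≤ u) : Lg η u ≤ Real.log 2 := by
  have hC := Real.cosh_pos η
  have hu0 : 0 < u := by linarith
  apply Real.log_le_log (by positivity)
  have : Real.sqrt (1 + u ^ 2 * Real.sinh η ^ 2) / (u * Real.cosh η) ≤ 1 := by
    rw [div_le_one (by positivity)]
    apply Real.sqrt_le_iff.2 ⟨by positivity, ?_⟩
    rw [mul_pow, Real.cosh_sq]; nlinarith
  linarith

lemma D_nonneg {η u : ℝ} (hη : 0 < η) (hu : 0 < u) : 0 ≤ Lg η u - Li η := by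
  have hC := Real.cosh_pos η
  have hS : 0 < Real.sinh η := Real.sinh_pos_iff.2 hη
  rw [Li_eq, Lg, sub_nonneg]
  apply Real.log_le_log (by positivity)
  gcongr 1 + ?_
  rw [div_le_div_iff₀ hC (by positivity)]
  have := q_ge η u
  nlinarith

lemma D_le {η u : ℝ} (hη : 0 < η) (hu : 0 < u) :
    Lg η u - Li η ≤ 1 / Real.sinh η * u ^ (-2 : ℝ) := by
  have hC := Real.cosh_pos η
  have hC1 := Real.one_le_cosh η
  have hS : 0 < Real.sinh η := Real.sinh_pos_iff.2 hη
  have hq := q_pos η u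
  have hq2 := q_sq η u
  have hge := q_ge η u
  rw [Li_eq, Lg]
  set q := Real.sqrt (1 + u ^ 2 * Real.sinh η ^ 2)
  set S := Real.sinh η
  set C := Real.cosh η
  rw [← Real.log_div (by positivity) (by positivity)]
  refine (Real.log_le_sub_one_of_pos (by positivity)).trans ?_
  have h1 : (1 + q / (u * C)) / (1 + S / C) - 1 ≤ (q - u * S) / (u * C) := by
    rw [div_sub_one (by positivity), div_le_iff₀ (by positivity)]
    have : 1 + q / (u * C) - (1 + S / C) = (q - u * S) / (u * C) := by field_simp; ring
    rw [this]
    have h0 : 0 ≤ (q - u * S) / (u * C) := div_nonneg (by linarith) (by positivity)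
    have : 0 < S / C := by positivity
    nlinarith
  refine h1.trans ?_
  have h2 : (q - u * S) / (u * C) = 1 / ((q + u * S) * (u * C)) := by
    field_simp; nlinarith
  have h3 : 1 / S * u ^ (-2 : ℝ) = 1 / (S * u ^ 2) := by
    rw [Real.rpow_neg hu.le, Real.rpow_two]; field_simp
  rw [h2, h3]
  apply one_div_le_one_div_of_le (by positivity)
  have : u * S * (u * 1) ≤ (q + u * S) * (u * C) := by gcongr; linarith
  nlinarith

lemma Lg_contOn (η : ℝ) : ContinuousOn (Lg η) (Set.Ioi 0) := by
  have hC := Real.cosh_pos η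
  intro u hu
  have hu : 0 < u := hu
  have hq := q_pos η u
  apply ContinuousAt.continuousWithinAt
  unfold Lg
  apply ContinuousAt.log
  · apply ContinuousAt.add continuousAt_const
    apply ContinuousAt.div
    · fun_prop
    · fun_prop
    · positivity
  · positivity

/-- An antiderivative of `Lg η - Li η`. -/
noncomputable def Phi (η u : ℝ) : ℝ :=
  u * (Lg η u - Li η) + Real.log ((u + 1) / (Real.sqrt (1 + u ^ 2 * Real.sinh η ^ 2) + Real.cosh η))

lemma Lg_hasDeriv {η u : ℝ} (hu : 0 < u) : HasDerivAt (Lg η)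
    (-1 / (u * Real.sqrt (1 + u ^ 2 * Real.sinh η ^ 2) *
      (u * Real.cosh η + Real.sqrt (1 + u ^ 2 * Real.sinh η ^ 2)))) u := by
  have hC := Real.cosh_pos η
  have hq := q_pos η u
  have hq2 := q_sq η u
  have h0 : HasDerivAt (fun u : ℝ => 1 + u ^ 2 * Real.sinh η ^ 2) (2 * u * Real.sinh η ^ 2) u := by
    have := (((hasDerivAt_id u).pow 2).mul_const (Real.sinh η ^ 2)).const_add 1
    simpa using this
  have h1 := h0.sqrt (by positivity)
  have h2 := h1.div ((hasDerivAt_id u).mul_const (Real.cosh η)) (by simp; constructor <;> positivity)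
  have h3 := (h2.const_add 1).log (by simp; positivity)
  convert! h3 using 1
  simp only [id, Pi.div_apply]
  set q := Real.sqrt (1 + u ^ 2 * Real.sinh η ^ 2)
  set S := Real.sinh η
  set C := Real.cosh η
  field_simp
  linear_combination hq2

lemma Phi_hasDeriv {η u : ℝ} (hu : 0 < u) : HasDerivAt (Phi η) (Lg η u - Li η) u := by
  have hC := Real.cosh_pos η
  have hq := q_pos η u
  have hq2 := q_sq η u
  have hC2 := Real.cosh_sq η
  have h0 : HasDerivAt (fun u : ℝ => 1 + u ^ 2 * Real.sinh η ^ 2) (2 * u * Real.sinh η ^ 2) u := by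
    have := (((hasDerivAt_id u).pow 2).mul_const (Real.sinh η ^ 2)).const_add 1
    simpa using this
  have h1 := h0.sqrt (by positivity)
  have h2 := ((hasDerivAt_id u).add_const 1).div (h1.add_const (Real.cosh η)) (by positivity)
  have h3 := h2.log (by simp; constructor <;> positivity)
  have h4 := ((hasDerivAt_id u).mul ((Lg_hasDeriv (η := η) hu).sub_const (Li η))).add h3
  convert! h4 using 1
  simp only [id, Pi.div_apply]
  set q := Real.sqrt (1 + u ^ 2 * Real.sinh η ^ 2)
  set S := Real.sinh η
  set C := Real.cosh η
  have key : u * (-1 / (u * q * (u * C + q))) + (1 * (q + C) - (u + 1) * (2 * u * S ^ 2 / (2 * q))) / (q + C) ^ 2 / ((u + 1) / (q + C)) = 0 := by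
    have hS2 : S ^ 2 = C ^ 2 - 1 := by linarith
    field_simp
    have e : q ^ 2 = 1 + u^2 * S^2 := hq2
    linear_combination q * u * hC2 + (q + C + C * u) * e
  linarith

lemma Phi_tendsto {η : ℝ} (hη : 0 < η) :
    Tendsto (Phi η) atTop (nhds (- Real.log (Real.sinh η))) := by
  have hC := Real.cosh_pos η
  have hS : 0 < Real.sinh η := Real.sinh_pos_iff.2 hη
  rw [← zero_add (-Real.log (Real.sinh η))]
  apply Tendsto.add
  · have hlim : Tendsto (fun u : ℝ => 1 / Real.sinh η * u⁻¹) atTop (nhds 0) := by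
      simpa using tendsto_inv_atTop_zero.const_mul (1 / Real.sinh η)
    refine tendsto_of_tendsto_of_tendsto_of_le_of_le' tendsto_const_nhds hlim ?_ ?_
    · filter_upwards [eventually_gt_atTop 0] with u hu
      exact mul_nonneg hu.le (D_nonneg hη hu)
    · filter_upwards [eventually_gt_atTop 0] with u hu
      have := mul_le_mul_of_nonneg_left (D_le hη hu) hu.le
      refine this.trans (le_of_eq ?_)
      rw [Real.rpow_neg hu.le, Real.rpow_two]; field_simp
  · rw [← Real.log_inv]
    apply Tendsto.log _ (by positivity)
    have hi : Tendsto (fun u : ℝ => u⁻¹) atTop (nhds 0) := tendsto_inv_atTop_zero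
    have : Tendsto (fun u : ℝ => (1 + u⁻¹) / (Real.sqrt (u⁻¹ ^ 2 + Real.sinh η ^ 2) + Real.cosh η * u⁻¹))
        atTop (nhds ((1 + 0) / (Real.sqrt (0 ^ 2 + Real.sinh η ^ 2) + Real.cosh η * 0))) := by
      apply Tendsto.div
      · exact hi.const_add 1
      · exact (((hi.pow 2).add_const _).sqrt).add (hi.const_mul _)
      · simp [Real.sqrt_sq hS.le, hS.ne']
    simp only [add_zero, ne_eq, OfNat.ofNat_ne_zero, not_false_eq_true, zero_pow, zero_add, mul_zero,
      Real.sqrt_sq hS.le, one_div] at this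
    refine this.congr' ?_
    filter_upwards [eventually_gt_atTop 0] with u hu
    have : 1 + u ^ 2 * Real.sinh η ^ 2 = u ^ 2 * (u⁻¹ ^ 2 + Real.sinh η ^ 2) := by field_simp
    rw [this, Real.sqrt_mul (by positivity), Real.sqrt_sq hu.le]
    have hp : 0 < Real.sqrt (u⁻¹ ^ 2 + Real.sinh η ^ 2) := Real.sqrt_pos.2 (by positivity)
    field_simp

lemma D_integral {η : ℝ} (hη : 0 < η) :
    ∫ u in Set.Ioi (1:ℝ), (Lg η u - Li η) = η - Real.log 2 - Real.log (Real.sinh η) := by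
  have hC := Real.cosh_pos η
  have h := integral_Ioi_of_hasDerivAt_of_nonneg' (a := 1) (g := Phi η) (g' := fun u => Lg η u - Li η)
    (fun x hx => Phi_hasDeriv (lt_of_lt_of_le one_pos hx))
    (fun x hx => D_nonneg hη (lt_trans one_pos hx)) (Phi_tendsto hη)
  rw [h]
  have hs : Real.sqrt (1 + 1 ^ 2 * Real.sinh η ^ 2) = Real.cosh η := by
    rw [one_pow, one_mul, add_comm, ← Real.cosh_sq, Real.sqrt_sq hC.le]
  have h1 : Phi η 1 = Real.log 2 - η := by
    unfold Phi Lg Li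
    rw [hs, one_mul, one_mul, div_self hC.ne']
    have : (1 + 1 : ℝ) / (Real.cosh η + Real.cosh η) = (Real.cosh η)⁻¹ := by field_simp
    rw [this, Real.log_inv]; norm_num; ring
  rw [h1]; ring

noncomputable def fD (η : ℝ) : ℝ → ℂ := Set.indicator (Set.Ioi 1) (fun u => ((Lg η u - Li η : ℝ) : ℂ))

noncomputable def Jc (η : ℝ) (w : ℂ) : ℂ := (Li η : ℂ) / (w - 1) + mellin (fD η) (1 - w)

lemma mellin_fD (η : ℝ) (w : ℂ) :
    mellin (fD η) (1 - w) = ∫ u in Set.Ioi (1:ℝ), (u : ℂ) ^ (-w) * ((Lg η u - Li η : ℝ) : ℂ) := by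
  unfold mellin fD
  have : ∀ t : ℝ, (t : ℂ) ^ (1 - w - 1) • Set.indicator (Set.Ioi 1) (fun u => ((Lg η u - Li η : ℝ) : ℂ)) t
      = Set.indicator (Set.Ioi 1) (fun u : ℝ => (u : ℂ) ^ (-w) * ((Lg η u - Li η : ℝ) : ℂ)) t := by
    intro t
    have e : 1 - w - 1 = -w := by ring
    by_cases h : t ∈ Set.Ioi (1:ℝ) <;> simp [h, e]
  simp_rw [this]
  rw [setIntegral_indicator measurableSet_Ioi]
  congr 2
  ext x; simp

lemma fD_bigO {η : ℝ} (hη : 0 < η) : fD η =O[atTop] (fun u : ℝ => u ^ (-(2:ℝ))) := by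
  apply Asymptotics.IsBigO.of_bound (1 / Real.sinh η)
  filter_upwards [eventually_gt_atTop 1] with u hu
  have hu0 : 0 < u := by linarith
  rw [fD, Set.indicator_of_mem (Set.mem_Ioi.2 hu), Complex.norm_real,
    Real.norm_of_nonneg (D_nonneg hη hu0), Real.norm_of_nonneg (by positivity)]
  exact D_le hη hu0

lemma fD_locInt (η : ℝ) : LocallyIntegrableOn (fD η) (Set.Ioi 0) := by
  have h : LocallyIntegrableOn (fun u => ((Lg η u - Li η : ℝ) : ℂ)) (Set.Ioi 0) := by
    apply ContinuousOn.locallyIntegrableOn _ measurableSet_Ioi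
    exact Complex.continuous_ofReal.comp_continuousOn ((Lg_contOn η).sub continuousOn_const)
  intro x hx
  obtain ⟨t, ht, h2⟩ := h x hx
  exact ⟨t, ht, h2.indicator measurableSet_Ioi⟩

lemma fD_bot (η b : ℝ) : fD η =O[nhdsWithin 0 (Set.Ioi 0)] (fun u : ℝ => u ^ (-b)) := by
  apply Asymptotics.IsBigO.of_bound 1
  have : Set.Iio (1:ℝ) ∈ nhdsWithin 0 (Set.Ioi 0) := mem_nhdsWithin_of_mem_nhds (Iio_mem_nhds one_pos)
  filter_upwards [this] with u hu
  have : u ∉ Set.Ioi (1:ℝ) := by simp at hu ⊢; linarith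
  rw [fD, Set.indicator_of_notMem this]
  simp

lemma mellin_fD_diff {η : ℝ} (hη : 0 < η) {w : ℂ} (hw : -1 < w.re) :
    DifferentiableAt ℂ (fun w => mellin (fD η) (1 - w)) w := by
  have := mellin_differentiableAt_of_isBigO_rpow (s := 1 - w) (fD_locInt η) (fD_bigO hη)
    (by simp; linarith) (fD_bot η ((1 - w).re - 1)) (by linarith)
  exact DifferentiableAt.comp (g := mellin (fD η)) (f := fun w => 1 - w) w this (by fun_prop)

lemma Jc_diff {η : ℝ} (hη : 0 < η) {w : ℂ} (hw : -1 < w.re) (hw1 : w ≠ 1) :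
    DifferentiableAt ℂ (Jc η) w := by
  unfold Jc
  apply DifferentiableAt.add _ (mellin_fD_diff hη hw)
  have := sub_ne_zero.2 hw1
  fun_prop (disch := assumption)

lemma Lg_meas (η : ℝ) : AEStronglyMeasurable (fun u => (Lg η u : ℂ)) (volume.restrict (Set.Ioi 1)) := by
  apply ContinuousOn.aestronglyMeasurable _ measurableSet_Ioi
  exact Complex.continuous_ofReal.comp_continuousOn
    ((Lg_contOn η).mono (Set.Ioi_subset_Ioi zero_le_one))

lemma Lg_int (η : ℝ) {w : ℂ} (hw : 1 < w.re) :
    IntegrableOn (fun u : ℝ => (u : ℂ) ^ (-w) * (Lg η u : ℂ)) (Set.Ioi 1) := by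
  have h1 := integrableOn_Ioi_cpow_of_lt (a := -w) (by simp; linarith) one_pos
  apply Integrable.mul_bdd (c := Real.log 2) h1 (Lg_meas η)
  rw [ae_restrict_iff' measurableSet_Ioi]
  refine Eventually.of_forall fun u hu => ?_
  have hu : 1 < u := hu
  rw [Complex.norm_real, Real.norm_of_nonneg (Lg_nonneg (by linarith))]
  exact Lg_le hu.le

lemma Jc_eq (η : ℝ) {w : ℂ} (hw : 1 < w.re) :
    ∫ u in Set.Ioi (1:ℝ), (u : ℂ) ^ (-w) * (Lg η u : ℂ) = Jc η w := by
  have h1 := integrableOn_Ioi_cpow_of_lt (a := -w) (by simp; linarith) one_pos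
  have h2 := integral_Ioi_cpow_of_lt (a := -w) (by simp; linarith) one_pos
  have h3 : ∫ u in Set.Ioi (1:ℝ), (u : ℂ) ^ (-w) * ((Lg η u - Li η : ℝ) : ℂ) =
     (∫ u in Set.Ioi (1:ℝ), (u : ℂ) ^ (-w) * (Lg η u : ℂ)) - ∫ u in Set.Ioi (1:ℝ), (u : ℂ) ^ (-w) * (Li η : ℂ) := by
    rw [← integral_sub (Lg_int η hw) (h1.mul_const _)]
    congr 1; ext u; push_cast; ring
  have hw1 : w - 1 ≠ 0 := by
    intro h; have := congrArg Complex.re h; simp at this; linarith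
  have hw2 : -w + 1 ≠ 0 := by intro h; apply hw1; linear_combination -h
  rw [Jc, mellin_fD, h3, integral_mul_const, h2]
  simp only [Complex.ofReal_one, Complex.one_cpow]
  have : (-1 : ℂ) / (-w + 1) = 1 / (w - 1) := by
    rw [div_eq_div_iff hw2 hw1]; ring
  rw [this]; ring

lemma Jc_norm (η : ℝ) {w : ℂ} (hw : 2 ≤ w.re) : ‖Jc η w‖ ≤ Real.log 2 := by
  rw [← Jc_eq η (by linarith)]
  have hi := integrableOn_Ioi_rpow_of_lt (a := -2) (c := 1) (by norm_num) one_pos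
  have h2 : ∫ u in Set.Ioi (1:ℝ), u ^ (-2 : ℝ) * Real.log 2 = Real.log 2 := by
    rw [integral_mul_const, integral_Ioi_rpow_of_lt (by norm_num) one_pos]; norm_num
  rw [← h2]
  apply MeasureTheory.norm_integral_le_of_norm_le (hi.mul_const _)
  rw [ae_restrict_iff' measurableSet_Ioi]
  refine Eventually.of_forall fun u hu => ?_
  have hu : 1 < u := hu
  rw [norm_mul, Complex.norm_real, Real.norm_of_nonneg (Lg_nonneg (by linarith)),
    Complex.norm_cpow_eq_rpow_re_of_pos (by linarith)]
  apply mul_le_mul _ (Lg_le hu.le) (Lg_nonneg (by linarith)) (by positivity)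
  apply Real.rpow_le_rpow_of_exponent_le hu.le
  simp; linarith

lemma Jc_zero {η : ℝ} (hη : 0 < η) :
    Jc η 0 = ((Real.log (Real.cosh η) - Real.log 2 - Real.log (Real.sinh η) : ℝ) : ℂ) := by
  rw [Jc, mellin_fD]
  simp only [neg_zero, Complex.cpow_zero, one_mul]
  rw [integral_complex_ofReal, D_integral hη]
  unfold Li; push_cast; ring

lemma lim_int : ∫ u in Set.Ioi (1:ℝ), u ^ (-2 : ℝ) * Real.log (1 + 1 / u) = 2 * Real.log 2 - 1 := by
  have hd : ∀ u ∈ Set.Ici (1:ℝ), HasDerivAt (fun u : ℝ => u⁻¹ - (1 + u⁻¹) * Real.log (1 + u⁻¹))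
      (u ^ (-2 : ℝ) * Real.log (1 + 1 / u)) u := by
    intro u hu
    have hu : 0 < u := lt_of_lt_of_le one_pos hu
    have h0 := hasDerivAt_inv hu.ne'
    have h1 := h0.const_add 1
    have hp : 1 + u⁻¹ ≠ 0 := by positivity
    have h2 := h0.sub (h1.mul (h1.log hp))
    convert! h2 using 1
    rw [Real.rpow_neg hu.le, Real.rpow_two, one_div]
    field_simp
    ring
  have hl : Tendsto (fun u : ℝ => u⁻¹ - (1 + u⁻¹) * Real.log (1 + u⁻¹)) atTop (nhds (0 - (1 + 0) * Real.log (1 + 0))) := by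
    have hi : Tendsto (fun u : ℝ => u⁻¹) atTop (nhds 0) := tendsto_inv_atTop_zero
    exact hi.sub ((hi.const_add 1).mul ((hi.const_add 1).log (by norm_num)))
  have := integral_Ioi_of_hasDerivAt_of_nonneg' hd (fun u hu => by
    have hu : 1 < u := hu
    apply mul_nonneg (by positivity)
    apply Real.log_nonneg
    have : 0 < 1 / u := by positivity
    linarith) hl
  rw [this]; norm_num

lemma Jc_two : Tendsto (fun η => Jc η 2) (nhdsWithin 0 (Set.Ioi 0))
    (nhds ((2 * Real.log 2 - 1 : ℝ) : ℂ)) := by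
  have h : ∀ η, Jc η 2 = ((∫ u in Set.Ioi (1:ℝ), u ^ (-2 : ℝ) * Lg η u : ℝ) : ℂ) := by
    intro η
    rw [← Jc_eq η (by norm_num), ← integral_complex_ofReal]
    apply setIntegral_congr_fun measurableSet_Ioi
    intro u hu
    have hu : 1 < u := hu
    simp only
    rw [Complex.ofReal_mul, Complex.ofReal_cpow (by linarith)]
    simp
  simp_rw [h]
  apply (Complex.continuous_ofReal.tendsto _).comp
  rw [← lim_int]
  have hi := integrableOn_Ioi_rpow_of_lt (a := -2) (c := 1) (by norm_num) one_pos
  apply tendsto_integral_filter_of_dominated_convergence (fun u => u ^ (-2 : ℝ) * Real.log 2) _ _ (hi.mul_const _)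
  · rw [ae_restrict_iff' measurableSet_Ioi]
    refine Eventually.of_forall fun u hu => ?_
    have hu : 1 < u := hu
    apply Tendsto.const_mul
    apply Tendsto.mono_left _ nhdsWithin_le_nhds
    have : ContinuousAt (fun η => Lg η u) 0 := by
      unfold Lg
      have h1 : ContinuousAt (fun η => Real.cosh η) 0 := Real.continuous_cosh.continuousAt
      have h2 : ContinuousAt (fun η => Real.sinh η) 0 := Real.continuous_sinh.continuousAt
      have hq := q_pos 0 u
      have hC := Real.cosh_pos 0
      have hu0 : 0 < u := by linarith
      apply ContinuousAt.log
      · apply ContinuousAt.add continuousAt_const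
        apply ContinuousAt.div
        · fun_prop
        · fun_prop
        · positivity
      · positivity
    have h0 : Lg 0 u = Real.log (1 + 1 / u) := by simp [Lg]
    rw [← h0]; exact this
  · refine Eventually.of_forall fun η => ?_
    apply ContinuousOn.aestronglyMeasurable _ measurableSet_Ioi
    apply ContinuousOn.mul
    · intro u hu
      have hu : 1 < u := hu
      exact (Real.continuousAt_rpow_const _ _ (Or.inl (by linarith))).continuousWithinAt
    · exact (Lg_contOn η).mono (Set.Ioi_subset_Ioi zero_le_one)
  · refine Eventually.of_forall fun η => ?_
    rw [ae_restrict_iff' measurableSet_Ioi]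
    refine Eventually.of_forall fun u hu => ?_
    have hu : 1 < u := hu
    rw [norm_mul, Real.norm_of_nonneg (Lg_nonneg (by linarith)), Real.norm_of_nonneg (by positivity)]
    exact mul_le_mul_of_nonneg_left (Lg_le hu.le) (by positivity)

noncomputable def cJ (s : ℂ) (j : ℕ) : ℂ := pochSym s j / ((Nat.factorial j : ℂ) * 4 ^ j)

noncomputable def bM (M j : ℕ) : ℝ := ((j + M).choose M : ℝ) * (1 / 4) ^ j

lemma bM_nonneg (M j : ℕ) : 0 ≤ bM M j := by unfold bM; positivity

lemma bM_summable (M : ℕ) : Summable (bM M) :=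
  summable_choose_mul_geometric_of_norm_lt_one M (r := (1 / 4 : ℝ)) (by norm_num)

lemma cJ_le {M : ℕ} {s : ℂ} (hs : ‖s‖ ≤ M) (j : ℕ) : ‖cJ s j‖ ≤ bM M j := by
  have h1 : ‖pochSym s j‖ ≤ (Nat.factorial j : ℝ) * ((j + M).choose M : ℝ) := by
    have e : (Nat.factorial j : ℝ) * ((j + M).choose M : ℝ) = ∏ i ∈ Finset.range j, ((M + 1 : ℝ) + i) := by
      have := Nat.ascFactorial_eq_factorial_mul_choose M j
      rw [Nat.ascFactorial_eq_prod_range, ← Nat.choose_symm_add, add_comm M j] at this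
      exact_mod_cast this.symm
    rw [e, pochSym, norm_prod]
    apply Finset.prod_le_prod (fun _ _ => norm_nonneg _)
    intro i _
    refine (norm_add_le _ _).trans ?_
    simp only [Complex.norm_natCast]
    linarith
  unfold cJ bM
  rw [norm_div, norm_mul, norm_pow, Complex.norm_natCast]
  have h4 : ‖(4:ℂ)‖ = 4 := by norm_num
  rw [h4, div_le_iff₀ (by positivity)]
  refine h1.trans (le_of_eq ?_)
  rw [one_div, inv_pow]
  field_simp

noncomputable def Sf (s : ℂ) : ℂ := 2 * Complex.sin ((Real.pi : ℂ) * s) / (Real.pi : ℂ)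

lemma Sf_diff : Differentiable ℂ Sf := by unfold Sf; fun_prop

lemma Sf_bdd (M : ℕ) : ∃ A : ℝ, 0 ≤ A ∧ ∀ s : ℂ, ‖s‖ ≤ M → ‖Sf s‖ ≤ A := by
  obtain ⟨A, hA⟩ := (isCompact_closedBall (0:ℂ) M).exists_bound_of_continuousOn
    Sf_diff.continuous.continuousOn
  refine ⟨A, (norm_nonneg _).trans (hA 0 (by simp)), fun s hs => hA s (by simpa using hs)⟩

lemma Xi_eq (ω : ℕ) (η : ℝ) (k j : ℕ) {s : ℂ} (hs : 1 < s.re) :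
    Xi5Term ω η k j s = Sf s * cJ s j *
      (((k : ℝ) * (ω : ℝ) : ℝ) : ℂ) ^ (1 - 2 * s - 2 * (j : ℂ)) * Jc η (2 * s + 2 * j) := by
  have hr : 1 < (2 * s + 2 * (j:ℂ)).re := by
    simp; have : (0:ℝ) ≤ j := by positivity
    linarith
  rw [← Jc_eq η hr]
  unfold Xi5Term Sf cJ Lg
  have : -(2 * s + 2 * (j:ℂ)) = -(2 * s) - 2 * (j : ℂ) := by ring
  rw [this]

lemma xi_bound (ω : ℕ) (hω : 1 ≤ ω) (η : ℝ) (M : ℕ) {σ : ℝ} (hσ : 1 < σ) :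
    ∃ u : ℕ × ℕ → ℝ, Summable u ∧ ∀ p s, ‖s‖ ≤ M → σ ≤ s.re → ‖Xi5Term ω η (p.1 + 1) p.2 s‖ ≤ u p := by
  obtain ⟨A, hA0, hA⟩ := Sf_bdd M
  have hl := Real.log_pos (x := 2) (by norm_num)
  have h1 : Summable (fun k : ℕ => 1 / |(k : ℝ) + 1| ^ (2 * σ - 1)) :=
    (Real.summable_one_div_nat_add_rpow 1 _).2 (by linarith)
  have h2 := (h1.mul_of_nonneg (bM_summable M) (fun k => by simp only [Pi.zero_apply]; positivity) (bM_nonneg M)).mul_left (A * Real.log 2)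
  refine ⟨_, h2, ?_⟩
  rintro ⟨k, j⟩ s hs hr
  have hω' : (1:ℝ) ≤ ω := by exact_mod_cast hω
  have hk : (1:ℝ) ≤ (k:ℝ) + 1 := by
    have : (0:ℝ) ≤ k := by positivity
    linarith
  have hj : (0:ℝ) ≤ j := by positivity
  rw [Xi_eq ω η _ _ (by linarith), norm_mul, norm_mul, norm_mul, Complex.norm_cpow_eq_rpow_re_of_pos (by push_cast; positivity)]
  have hJ : ‖Jc η (2 * s + 2 * j)‖ ≤ Real.log 2 := Jc_norm η (by simp; linarith)
  have hp : (((k + 1 : ℕ) : ℝ) * (ω : ℝ)) ^ (1 - 2 * s - 2 * (j : ℂ)).re ≤ 1 / |(k : ℝ) + 1| ^ (2 * σ - 1) := by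
    have hre : (1 - 2 * s - 2 * (j : ℂ)).re = 1 - 2 * s.re - 2 * j := by simp
    rw [hre, abs_of_pos (by linarith), one_div, ← Real.rpow_neg (by linarith)]
    push_cast
    calc (((k:ℝ) + 1) * (ω : ℝ)) ^ (1 - 2 * s.re - 2 * j) ≤ (((k:ℝ) + 1) * (ω : ℝ)) ^ (-(2 * σ - 1)) := by
          apply Real.rpow_le_rpow_of_exponent_le
          · nlinarith
          · linarith
      _ ≤ _ := by
          apply Real.rpow_le_rpow_of_nonpos (by linarith)
          · nlinarith
          · linarith
  calc _ ≤ A * bM M j * (1 / |(k : ℝ) + 1| ^ (2 * σ - 1)) * Real.log 2 := by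
        have hb := bM_nonneg M j
        gcongr
        · exact hA s hs
        · exact cJ_le hs j
    _ = _ := by ring

lemma zeta_bound : ∃ Z : ℝ, 0 ≤ Z ∧ ∀ z : ℂ, 2 ≤ z.re → ‖riemannZeta z‖ ≤ Z := by
  have h1 : Summable (fun k : ℕ => 1 / |(k : ℝ) + 1| ^ (2 : ℝ)) :=
    (Real.summable_one_div_nat_add_rpow 1 _).2 (by norm_num)
  refine ⟨∑' k : ℕ, 1 / |(k : ℝ) + 1| ^ (2 : ℝ), tsum_nonneg fun k => by positivity, fun z hz => ?_⟩
  rw [zeta_eq_tsum_one_div_nat_add_one_cpow (by linarith)]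
  apply tsum_of_norm_bounded h1.hasSum
  intro k
  have hk : (1:ℝ) ≤ (k:ℝ) + 1 := by
    have : (0:ℝ) ≤ k := by positivity
    linarith
  have : ((k:ℂ) + 1) = (((k:ℝ) + 1 : ℝ) : ℂ) := by push_cast; rfl
  rw [this, norm_div, norm_one, Complex.norm_cpow_eq_rpow_re_of_pos (by linarith), abs_of_pos (by linarith)]
  apply one_div_le_one_div_of_le (by positivity)
  exact Real.rpow_le_rpow_of_exponent_le hk hz

noncomputable def Gj (ω : ℕ) (η : ℝ) (j : ℕ) (s : ℂ) : ℂ :=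
  cJ s j * (ω : ℂ) ^ (1 - 2 * s - 2 * (j : ℂ)) * riemannZeta (2 * s + 2 * j - 1) * Jc η (2 * s + 2 * j)

lemma G_bound (ω : ℕ) (hω : 1 ≤ ω) (η : ℝ) (M : ℕ) :
    ∃ u : ℕ → ℝ, Summable u ∧ ∀ j s, ‖s‖ ≤ M → -(1 / 2) < s.re → ‖Gj ω η (j + 2) s‖ ≤ u j := by
  obtain ⟨Z, hZ0, hZ⟩ := zeta_bound
  have hl := Real.log_pos (x := 2) (by norm_num)
  have h2 := ((summable_nat_add_iff 2).2 (bM_summable M)).mul_right (1 * Z * Real.log 2)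
  refine ⟨_, h2, ?_⟩
  intro j s hs hr
  have hω' : (1:ℝ) ≤ ω := by exact_mod_cast hω
  have hj : (0:ℝ) ≤ j := by positivity
  have hω2 : (ω:ℂ) = ((ω:ℝ):ℂ) := by simp
  unfold Gj
  rw [norm_mul, norm_mul, norm_mul, hω2, Complex.norm_cpow_eq_rpow_re_of_pos (by linarith), ← mul_assoc, ← mul_assoc]
  have hJ : ‖Jc η (2 * s + 2 * ((j + 2 : ℕ) : ℂ))‖ ≤ Real.log 2 := Jc_norm η (by simp; linarith)
  have hz : ‖riemannZeta (2 * s + 2 * ((j + 2 : ℕ) : ℂ) - 1)‖ ≤ Z := hZ _ (by simp; linarith)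
  have hp : (ω : ℝ) ^ (1 - 2 * s - 2 * ((j + 2 : ℕ) : ℂ)).re ≤ 1 :=
    Real.rpow_le_one_of_one_le_of_nonpos hω' (by simp; linarith)
  have hb := bM_nonneg M (j + 2)
  gcongr
  exact cJ_le hs _

lemma cJ_diff (j : ℕ) : Differentiable ℂ (fun s => cJ s j) := by
  unfold cJ pochSym; fun_prop

lemma G_diff (ω : ℕ) (hω : 1 ≤ ω) {η : ℝ} (hη : 0 < η) (j : ℕ) {s : ℂ} (hr : -(1 / 2) < s.re) :
    DifferentiableAt ℂ (Gj ω η (j + 2)) s := by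
  have hj : (0:ℝ) ≤ j := by positivity
  have hω0 : (ω : ℂ) ≠ 0 := by exact_mod_cast (by omega : ω ≠ 0)
  unfold Gj
  apply DifferentiableAt.mul
  · apply DifferentiableAt.mul
    · apply DifferentiableAt.mul
      · exact cJ_diff _ s
      · apply DifferentiableAt.const_cpow (by fun_prop) (Or.inl hω0)
    · apply DifferentiableAt.fun_comp' (g := riemannZeta) s _ (by fun_prop)
      apply differentiableAt_riemannZeta
      intro h; have := congrArg Complex.re h; simp at this; linarith
  · apply DifferentiableAt.fun_comp' (g := Jc η) s _ (by fun_prop)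
    apply Jc_diff hη
    · simp; linarith
    · intro h; have := congrArg Complex.re h; simp at this; linarith

noncomputable def Tl (ω : ℕ) (η : ℝ) (s : ℂ) : ℂ := ∑' j, Gj ω η (j + 2) s

lemma halfOpen : IsOpen {s : ℂ | -(1 / 2) < s.re} := isOpen_lt continuous_const Complex.continuous_re

lemma Tl_diff (ω : ℕ) (hω : 1 ≤ ω) {η : ℝ} (hη : 0 < η) :
    DifferentiableOn ℂ (Tl ω η) {s : ℂ | -(1 / 2) < s.re} := by
  intro s hs
  obtain ⟨M, hM⟩ := exists_nat_gt ‖s‖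
  obtain ⟨u, hu, hb⟩ := G_bound ω hω η M
  have hO : IsOpen ({s : ℂ | -(1 / 2) < s.re} ∩ Metric.ball 0 M) := halfOpen.inter Metric.isOpen_ball
  have := Complex.differentiableOn_tsum_of_summable_norm (F := fun j s => Gj ω η (j + 2) s) hu
    (fun j z hz => (G_diff ω hω hη j hz.1).differentiableWithinAt) hO
    (fun j z hz => hb j z (by simpa using (mem_ball_zero_iff.1 hz.2).le) hz.1)
  exact (this.differentiableAt (hO.mem_nhds ⟨hs, by simpa using hM⟩)).differentiableWithinAt

lemma pochSym_zero (j : ℕ) : pochSym 0 (j + 1) = 0 := by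
  unfold pochSym
  apply Finset.prod_eq_zero (i := 0) (by simp) (by simp)

lemma Tl_zero (ω : ℕ) (η : ℝ) : Tl ω η 0 = 0 := by
  unfold Tl Gj cJ
  have : ∀ j, pochSym 0 (j + 2) = 0 := fun j => pochSym_zero (j + 1)
  simp [this]

noncomputable def Pf (ω : ℕ) (η : ℝ) (s : ℂ) : ℂ :=
  (ω : ℂ) ^ (1 - 2 * s) * ((2 * s - 2)⁻¹ * riemannZeta₁ (2 * s - 1)) * Jc η (2 * s) +
  (1 / 8) * (ω : ℂ) ^ (-1 - 2 * s) * riemannZeta₁ (2 * s + 1) * Jc η (2 * s + 2) + Tl ω η s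

lemma tsum_eq (ω : ℕ) (hω : 1 ≤ ω) (η : ℝ) {s : ℂ} (hs : 1 < s.re) :
    ∑' p : ℕ × ℕ, Xi5Term ω η (p.1 + 1) p.2 s = Sf s * Pf ω η s := by
  obtain ⟨M, hM⟩ := exists_nat_gt ‖s‖
  have hsum : Summable (fun p : ℕ × ℕ => Xi5Term ω η (p.1 + 1) p.2 s) := by
    obtain ⟨u, hu, hb⟩ := xi_bound ω hω η M hs
    exact Summable.of_norm_bounded hu (fun p => hb p s hM.le le_rfl)
  have hω' : (0:ℝ) ≤ ω := by positivity
  have hin : ∀ j : ℕ, ∑' k : ℕ, Xi5Term ω η (k + 1) j s = Sf s * Gj ω η j s := by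
    intro j
    have hj : (0:ℝ) ≤ j := by positivity
    have h1 : ∀ k : ℕ, Xi5Term ω η (k + 1) j s =
        Sf s * cJ s j * (ω : ℂ) ^ (1 - 2 * s - 2 * (j : ℂ)) * Jc η (2 * s + 2 * j) *
          (1 / ((k : ℂ) + 1) ^ (2 * s + 2 * j - 1)) := by
      intro k
      rw [Xi_eq ω η _ _ hs, Complex.ofReal_mul, Complex.mul_cpow_ofReal_nonneg (by positivity) hω']
      have e : (1 - 2 * s - 2 * (j : ℂ)) = -(2 * s + 2 * j - 1) := by ring
      rw [e, Complex.cpow_neg (((k + 1 : ℕ) : ℝ) : ℂ)]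
      push_cast
      ring
    simp_rw [h1]
    rw [tsum_mul_left, ← zeta_eq_tsum_one_div_nat_add_one_cpow (by simp; linarith), Gj]
    ring
  have hG : Summable (fun j => Gj ω η j s) := by
    rw [← summable_nat_add_iff 2]
    obtain ⟨u, hu, hb⟩ := G_bound ω hω η M
    exact Summable.of_norm_bounded hu (fun p => hb p s hM.le (by linarith))
  rw [hsum.tsum_prod, ← Summable.tsum_comm (f := fun j k => Xi5Term ω η (j + 1) k s) hsum]
  simp_rw [hin]
  rw [tsum_mul_left, ← hG.sum_add_tsum_nat_add 2]
  congr 1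
  have hs0 : s ≠ 0 := by rintro rfl; simp at hs; linarith
  rw [Pf, Tl, Finset.sum_range_succ, Finset.sum_range_one]
  congr 2
  · unfold Gj cJ pochSym
    rw [riemannZeta_eq_inv_sub_mul (s := 2 * s + 2 * ((0 : ℕ) : ℂ) - 1)]
    · have : 2 * s - 1 - 1 = 2 * s - 2 := by ring
      simp [this]
    · intro h; have := congrArg Complex.re h; simp at this; linarith
  · unfold Gj cJ pochSym
    rw [riemannZeta_eq_inv_sub_mul (s := 2 * s + 2 * ((1 : ℕ) : ℂ) - 1)]
    · have e1 : 2 * s + 2 - 1 - 1 = 2 * s := by ring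
      have e2 : 2 * s + 2 - 1 = 2 * s + 1 := by ring
      have e3 : 1 - 2 * s - 2 = -1 - 2 * s := by ring
      simp only [Nat.cast_one, mul_one, e1, e2, e3]
      simp
      field_simp
      norm_num
      left
      ring
    · intro h; have := congrArg Complex.re h; simp at this; linarith

lemma Pf_analytic (ω : ℕ) (hω : 1 ≤ ω) {η : ℝ} (hη : 0 < η) : AnalyticAt ℂ (Pf ω η) 0 := by
  have hω0 : (ω : ℂ) ≠ 0 := by exact_mod_cast (by omega : ω ≠ 0)
  have hO : IsOpen ({s : ℂ | -(1 / 2) < s.re} ∩ {s : ℂ | s.re < 1 / 2}) :=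
    halfOpen.inter (isOpen_lt Complex.continuous_re continuous_const)
  apply DifferentiableOn.analyticAt (s := {s : ℂ | -(1 / 2) < s.re} ∩ {s : ℂ | s.re < 1 / 2}) _
    (hO.mem_nhds (by simp))
  rintro s ⟨hs1, hs2⟩
  simp only [Set.mem_ofPred_eq] at hs1 hs2
  apply DifferentiableAt.differentiableWithinAt
  unfold Pf
  have hne : 2 * s - 2 ≠ 0 := by
    intro h; have := congrArg Complex.re h; simp at this; linarith
  apply DifferentiableAt.add
  · apply DifferentiableAt.add
    · apply DifferentiableAt.mul
      · apply DifferentiableAt.mul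
        · apply DifferentiableAt.const_cpow (by fun_prop) (Or.inl hω0)
        · fun_prop (disch := assumption)
      · apply DifferentiableAt.fun_comp' (g := Jc η) s _ (by fun_prop)
        apply Jc_diff hη
        · simp; linarith
        · intro h; have := congrArg Complex.re h; simp at this; linarith
    · apply DifferentiableAt.mul
      · apply DifferentiableAt.mul
        · apply DifferentiableAt.mul (by fun_prop)
          apply DifferentiableAt.const_cpow (by fun_prop) (Or.inl hω0)
        · fun_prop
      · apply DifferentiableAt.fun_comp' (g := Jc η) s _ (by fun_prop)
        apply Jc_diff hη
        · simp; linarith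
        · intro h; have := congrArg Complex.re h; simp at this; linarith
  · exact (Tl_diff ω hω hη).differentiableAt (halfOpen.mem_nhds hs1)

lemma Pf_mero (ω : ℕ) (hω : 1 ≤ ω) {η : ℝ} (hη : 0 < η) :
    MeromorphicOn (Pf ω η) {s : ℂ | -(1 / 2) < s.re} := by
  have hω0 : (ω : ℂ) ≠ 0 := by exact_mod_cast (by omega : ω ≠ 0)
  intro s hs
  have hT : MeromorphicAt (Tl ω η) s :=
    ((Tl_diff ω hω hη).analyticAt (halfOpen.mem_nhds hs)).meromorphicAt
  have key : ∀ c : ℝ, 0 ≤ c → MeromorphicAt (fun s => Jc η (2 * s + (c:ℂ))) s := by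
    intro c hc
    unfold Jc
    apply MeromorphicAt.add
    · apply MeromorphicAt.div (MeromorphicAt.const _ _)
      apply AnalyticAt.meromorphicAt
      fun_prop
    · apply AnalyticAt.meromorphicAt
      apply DifferentiableOn.analyticAt (s := {s : ℂ | -(1 / 2) < s.re}) _ (halfOpen.mem_nhds hs)
      intro z hz
      simp only [Set.mem_ofPred_eq] at hz
      apply DifferentiableAt.differentiableWithinAt
      apply DifferentiableAt.fun_comp' (g := fun w => mellin (fD η) (1 - w)) z _ (by fun_prop)
      apply mellin_fD_diff hη
      simp; linarith
  have ent : ∀ f : ℂ → ℂ, Differentiable ℂ f → MeromorphicAt f s := fun f hf =>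
    (hf.analyticAt s).meromorphicAt
  have k0 := key 0 le_rfl
  have k2 := key 2 (by norm_num)
  simp only [Complex.ofReal_zero, add_zero, Complex.ofReal_ofNat] at k0 k2
  unfold Pf
  apply MeromorphicAt.add
  · apply MeromorphicAt.add
    · apply MeromorphicAt.mul _ k0
      apply MeromorphicAt.mul
      · exact ent _ (fun z => DifferentiableAt.const_cpow (by fun_prop) (Or.inl hω0))
      · apply MeromorphicAt.mul
        · exact (ent (fun s => 2 * s - 2) (by fun_prop)).inv
        · exact ent (fun s => riemannZeta₁ (2 * s - 1)) (by fun_prop)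
    · apply MeromorphicAt.mul _ k2
      apply MeromorphicAt.mul
      · apply MeromorphicAt.mul (MeromorphicAt.const _ _)
        exact ent _ (fun z => DifferentiableAt.const_cpow (by fun_prop) (Or.inl hω0))
      · exact ent (fun s => riemannZeta₁ (2 * s + 1)) (by fun_prop)
  · exact hT

lemma Sf_zero : Sf 0 = 0 := by simp [Sf]

lemma Sf_deriv : HasDerivAt Sf 2 0 := by
  have h : HasDerivAt (fun s : ℂ => (Real.pi : ℂ) * s) (Real.pi : ℂ) 0 := by
    simpa using (hasDerivAt_id (0:ℂ)).const_mul (Real.pi : ℂ)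
  have h1 := ((h.csin).const_mul 2).div_const (Real.pi : ℂ)
  convert! h1 using 1
  have : (Real.pi : ℂ) ≠ 0 := by exact_mod_cast Real.pi_ne_zero
  simp [this]

lemma Pf_zero (ω : ℕ) (hω : 1 ≤ ω) (η : ℝ) :
    2 * Pf ω η 0 = -(ω : ℂ) / 6 * Jc η 0 + Jc η 2 / (4 * ω) := by
  have hω0 : (ω : ℂ) ≠ 0 := by exact_mod_cast (by omega : ω ≠ 0)
  have hz : riemannZeta (-1) = -1 / 12 := by
    have := riemannZeta_neg_nat_eq_bernoulli' 1
    simp only [Nat.cast_one] at this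
    rw [this]
    have : bernoulli' (1 + 1) = 1 / 6 := bernoulli'_two.trans (by norm_num)
    rw [this]; norm_num
  have h1 : riemannZeta₁ (-1) = 1 / 6 := by
    have := riemannZeta_eq_inv_sub_mul (s := -1) (by norm_num)
    rw [hz] at this
    norm_num at this ⊢
    linear_combination (-2) * this
  unfold Pf
  simp only [mul_zero, zero_sub, sub_zero, zero_add, Tl_zero, h1, riemannZeta₁_one, Complex.cpow_one, Complex.cpow_neg_one]
  field_simp
  ring

/-- for a fixed integer `ω ≥ 1`, for every `η > 0` the double series
`Ξ₅(s)` converges absolutely and locally uniformly on the strip `1 < Re(s) < 2`, and its sum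
extends to a meromorphic function on the half-plane `Re(s) > -1/2` which is holomorphic at
`s = 0` with value `Ξ₅(0) = 0`; moreover its derivative at `0` satisfies
`Ξ₅'(0) = (ζ(0) + log 2)/(2ω) + (ω/6)·log 2 + (ω/6)·log η + o(1)` as `η → 0⁺`. -/
theorem statement10 (ω : ℕ) (hω : 1 ≤ ω) :
    ∃ F : ℝ → ℂ → ℂ,
      (∀ η : ℝ, 0 < η →
        (∀ s ∈ {s : ℂ | 1 < s.re ∧ s.re < 2},
          Summable (fun p : ℕ × ℕ => ‖Xi5Term ω η (p.1 + 1) p.2 s‖)) ∧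
        TendstoLocallyUniformlyOn
          (fun (N : Finset (ℕ × ℕ)) (s : ℂ) => ∑ p ∈ N, Xi5Term ω η (p.1 + 1) p.2 s)
          (fun s : ℂ => ∑' p : ℕ × ℕ, Xi5Term ω η (p.1 + 1) p.2 s)
          atTop {s : ℂ | 1 < s.re ∧ s.re < 2} ∧
        MeromorphicOn (F η) {s : ℂ | -(1 / 2) < s.re} ∧
        Set.EqOn (F η) (fun s : ℂ => ∑' p : ℕ × ℕ, Xi5Term ω η (p.1 + 1) p.2 s)
          {s : ℂ | 1 < s.re ∧ s.re < 2} ∧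
        AnalyticAt ℂ (F η) 0 ∧
        F η 0 = 0) ∧
      Tendsto
        (fun η : ℝ => deriv (F η) 0 -
          ((riemannZeta 0 + (Real.log 2 : ℂ)) / (2 * (ω : ℂ)) +
            ((ω : ℂ) / 6) * (Real.log 2 : ℂ) + ((ω : ℂ) / 6) * (Real.log η : ℂ)))
        (nhdsWithin 0 (Set.Ioi 0)) (nhds 0) := by
  refine ⟨fun η s => Sf s * Pf ω η s, ?_, ?_⟩
  · intro η hη
    refine ⟨?_, ?_, ?_, ?_, ?_, ?_⟩
    · rintro s ⟨hs, -⟩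
      obtain ⟨M, hM⟩ := exists_nat_gt ‖s‖
      obtain ⟨u, hu, hb⟩ := xi_bound ω hω η M hs
      exact Summable.of_nonneg_of_le (fun _ => norm_nonneg _) (fun p => hb p s hM.le le_rfl) hu
    · intro v hv x hx
      obtain ⟨M, hM⟩ := exists_nat_gt ‖x‖
      have hx1 : 1 < x.re := hx.1
      obtain ⟨u, hu, hb⟩ := xi_bound ω hω η M (σ := (1 + x.re) / 2) (by linarith)
      refine ⟨Metric.ball 0 M ∩ {s : ℂ | (1 + x.re) / 2 < s.re}, ?_, ?_⟩
      · apply mem_nhdsWithin_of_mem_nhds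
        apply (Metric.isOpen_ball.inter (isOpen_lt continuous_const Complex.continuous_re)).mem_nhds
        refine ⟨by simpa using hM, ?_⟩
        change (1 + x.re) / 2 < x.re
        linarith
      · exact tendstoUniformlyOn_tsum hu
          (fun p z hz => hb p z (mem_ball_zero_iff.1 hz.1).le (le_of_lt hz.2)) v hv
    · intro s hs
      exact (Sf_diff.analyticAt s).meromorphicAt.mul (Pf_mero ω hω hη s hs)
    · rintro s ⟨hs, -⟩
      exact (tsum_eq ω hω η hs).symm
    · exact (Sf_diff.analyticAt 0).mul (Pf_analytic ω hω hη)
    · simp [Sf_zero]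
  · have hω0 : (ω : ℂ) ≠ 0 := by exact_mod_cast (by omega : ω ≠ 0)
    have hd : ∀ η : ℝ, 0 < η → deriv (fun s => Sf s * Pf ω η s) 0 =
        -(ω : ℂ) / 6 * Jc η 0 + Jc η 2 / (4 * ω) := by
      intro η hη
      have := Sf_deriv.mul (Pf_analytic ω hω hη).differentiableAt.hasDerivAt
      rw [Sf_zero, zero_mul, add_zero, Pf_zero ω hω] at this
      exact this.deriv
    have hsl : Tendsto (fun η : ℝ => Real.log (Real.cosh η) - Real.log (Real.sinh η / η))
        (nhdsWithin 0 (Set.Ioi 0)) (nhds (Real.log 1 - Real.log 1)) := by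
      apply Tendsto.sub
      · apply Tendsto.log _ one_ne_zero
        have := Real.continuous_cosh.tendsto 0
        rw [Real.cosh_zero] at this
        exact this.mono_left nhdsWithin_le_nhds
      · apply Tendsto.log _ one_ne_zero
        have h := (Real.hasDerivAt_sinh 0).tendsto_slope_zero_right
        simp only [Real.cosh_zero, Real.sinh_zero, zero_add, sub_zero, smul_eq_mul] at h
        refine h.congr fun η => ?_
        rw [div_eq_inv_mul]
    have h2 := (Complex.continuous_ofReal.tendsto _).comp hsl
    have h3 : Tendsto (fun η : ℝ => -(ω : ℂ) / 6 *
        ((Real.log (Real.cosh η) - Real.log (Real.sinh η / η) : ℝ) : ℂ) +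
        (Jc η 2 - ((2 * Real.log 2 - 1 : ℝ) : ℂ)) / (4 * ω))
        (nhdsWithin 0 (Set.Ioi 0)) (nhds (-(ω : ℂ) / 6 * ((Real.log 1 - Real.log 1 : ℝ) : ℂ) +
          (((2 * Real.log 2 - 1 : ℝ) : ℂ) - ((2 * Real.log 2 - 1 : ℝ) : ℂ)) / (4 * ω))) :=
      (h2.const_mul _).add ((Jc_two.sub_const _).div_const _)
    simp only [sub_self, Complex.ofReal_zero, mul_zero, zero_div, add_zero] at h3
    refine h3.congr' ?_
    filter_upwards [self_mem_nhdsWithin] with η hη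
    have hη : 0 < η := hη
    rw [hd η hη, Jc_zero hη, riemannZeta_zero,
      Real.log_div (Real.sinh_pos_iff.2 hη).ne' hη.ne']
    push_cast
    field_simp
    ring
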